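/- Let $n \ge 2$ be an integer, and let $\phi > 0$, $p, q, s$ be real numbers with $s \ge 0$ and $p^2 - q\phi \ge 0$. Set $\omega^2 = \phi^2 + s$. Then the identity $$n\frac{q\phi - p^2}{\phi^2}\omega^6 + n p^2 \omega^4 + \frac{n-1}{4}\phi^2 p^2 s - 2n p^2 \phi^2 \omega^2 + (2p^2\phi^2 - p^2 s - q\phi\,\omega^2)(s + n\omega^2) = n\frac{q\phi - p^2}{\phi^2} s^2 \omega^2 + (n-1)(q\phi - p^2)s\,\omega^2 - (n+2)p^2 s^2 - \frac{3}{4}(n-1)\phi^2 p^2 s$$ holds, and consequently this quantity is $\le 0$. -/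

import Mathlib

/-!
Let `κ = (φ'/φ)'`, so that `φ φ'' = φ'² + κ φ²`. Substituting this for `φ φ''` makes the quantity
linear in `κ` and `φ'²`. With `ω² = φ² + s`, the coefficient of `κ` is `s ω² (n s + (n - 1) φ²) ≥ 0`
and that of `φ'²` is `-s ((n + 2) s + 3/4 (n - 1) φ²) ≤ 0`. Both terms are therefore nonpositive
when `κ ≤ 0`, that is, when `φ'² - φ φ'' ≥ 0`.

In the lemmas, `a` stands for `φ²` and `b` for `φ'²`.
-/

section Decomposition

theorem gradient_quantity_kappa_coeff_eq {R : Type*} [CommRing R] (n a s : R) :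
    n * (a + s) ^ 3 - a * (a + s) * (s + n * (a + s))
      = s * (a + s) * (n * s + (n - 1) * a) := by
  ring

variable {K : Type*} [Field K] [NeZero (2 : K)]

theorem gradient_quantity_deriv_sq_coeff_eq (n a s : K) :
    n * (a + s) ^ 2 + (n - 1) / 4 * a * s - 2 * n * a * (a + s)
        + (a - 2 * s) * (s + n * (a + s))
      = -(s * ((n + 2) * s + 3 / 4 * (n - 1) * a)) := by
  have hfour : (4 : K) ≠ 0 := by
    rw [show (4 : K) = 2 * 2 by norm_num]
    exact mul_ne_zero two_ne_zero two_ne_zero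
  field_simp
  ring

theorem gradient_quantity_eq_kappa_term_sub_deriv_sq_term (n a b κ s : K) :
    n * κ * (a + s) ^ 3 + n * b * (a + s) ^ 2 + (n - 1) / 4 * a * b * s
        - 2 * n * b * a * (a + s)
        + (2 * b * a - b * s - (b + κ * a) * (a + s)) * (s + n * (a + s))
      = κ * (s * (a + s) * (n * s + (n - 1) * a))
        - b * (s * ((n + 2) * s + 3 / 4 * (n - 1) * a)) := by
  linear_combination κ * gradient_quantity_kappa_coeff_eq n a s
    + b * gradient_quantity_deriv_sq_coeff_eq n a s

end Decomposition

section Sign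

variable {K : Type*} [Field K] [LinearOrder K] [IsStrictOrderedRing K]

theorem gradient_quantity_kappa_term_sub_deriv_sq_term_nonpos {n a b κ s : K}
    (hn : 1 ≤ n) (ha : 0 ≤ a) (hb : 0 ≤ b) (hκ : κ ≤ 0) (hs : 0 ≤ s) :
    κ * (s * (a + s) * (n * s + (n - 1) * a))
      - b * (s * ((n + 2) * s + 3 / 4 * (n - 1) * a)) ≤ 0 := by
  have : 0 ≤ n - 1 := sub_nonneg.mpr hn
  have : 0 ≤ n := zero_le_one.trans hn
  have kappa_term_nonpos : κ * (s * (a + s) * (n * s + (n - 1) * a)) ≤ 0 :=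
    mul_nonpos_of_nonpos_of_nonneg hκ (by positivity)
  have deriv_sq_term_nonneg : 0 ≤ b * (s * ((n + 2) * s + 3 / 4 * (n - 1) * a)) := by
    positivity
  exact sub_nonpos.mpr (kappa_term_nonpos.trans deriv_sq_term_nonneg)

theorem gradient_estimate_algebraic_identity_general
    {n φ p q s : K} (hn : 1 ≤ n) (hφ : φ ≠ 0) (hs : 0 ≤ s)
    (hpq : 0 ≤ p ^ 2 - q * φ) :
    n * ((q * φ - p ^ 2) / φ ^ 2) * (φ ^ 2 + s) ^ 3
        + n * p ^ 2 * (φ ^ 2 + s) ^ 2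
        + (n - 1) / 4 * φ ^ 2 * p ^ 2 * s
        - 2 * n * p ^ 2 * φ ^ 2 * (φ ^ 2 + s)
        + (2 * p ^ 2 * φ ^ 2 - p ^ 2 * s - q * φ * (φ ^ 2 + s))
            * (s + n * (φ ^ 2 + s))
      = n * ((q * φ - p ^ 2) / φ ^ 2) * s ^ 2 * (φ ^ 2 + s)
        + (n - 1) * (q * φ - p ^ 2) * s * (φ ^ 2 + s)
        - (n + 2) * p ^ 2 * s ^ 2
        - 3 / 4 * (n - 1) * φ ^ 2 * p ^ 2 * s ∧
    n * ((q * φ - p ^ 2) / φ ^ 2) * (φ ^ 2 + s) ^ 3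
        + n * p ^ 2 * (φ ^ 2 + s) ^ 2
        + (n - 1) / 4 * φ ^ 2 * p ^ 2 * s
        - 2 * n * p ^ 2 * φ ^ 2 * (φ ^ 2 + s)
        + (2 * p ^ 2 * φ ^ 2 - p ^ 2 * s - q * φ * (φ ^ 2 + s))
            * (s + n * (φ ^ 2 + s)) ≤ 0 := by
  obtain ⟨κ, κ_def⟩ : ∃ κ, (q * φ - p ^ 2) / φ ^ 2 = κ := ⟨_, rfl⟩
  have hκ : κ ≤ 0 :=
    κ_def ▸ div_nonpos_of_nonpos_of_nonneg (by linarith) (sq_nonneg φ)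
  have second_deriv_eq : q * φ = p ^ 2 + κ * φ ^ 2 :=
    sub_eq_iff_eq_add'.mp ((div_eq_iff (pow_ne_zero 2 hφ)).mp κ_def)
  have decomposition :=
    gradient_quantity_eq_kappa_term_sub_deriv_sq_term n (φ ^ 2) (p ^ 2) κ s
  rw [κ_def, second_deriv_eq]
  exact ⟨decomposition.trans (by ring), decomposition.trans_le
    (gradient_quantity_kappa_term_sub_deriv_sq_term_nonpos hn (sq_nonneg φ) (sq_nonneg p) hκ hs)⟩

end Sign

/-- The key pointwise algebraic identity and sign estimate in the gradient
estimate: with `ω² = φ² + s`, `s = |∇̃ρ|² ≥ 0`, `p = φ'`, `q = φ''` and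
`p² - qφ ≥ 0`, the bracketed quantity rewrites as stated and is `≤ 0`. -/
theorem gradient_estimate_algebraic_identity
    (n : ℕ) (hn : 2 ≤ n) (φ p q s : ℝ) (hφ : 0 < φ) (hs : 0 ≤ s)
    (hpq : 0 ≤ p ^ 2 - q * φ) :
    (n : ℝ) * ((q * φ - p ^ 2) / φ ^ 2) * (φ ^ 2 + s) ^ 3
        + n * p ^ 2 * (φ ^ 2 + s) ^ 2
        + (n - 1) / 4 * φ ^ 2 * p ^ 2 * s
        - 2 * n * p ^ 2 * φ ^ 2 * (φ ^ 2 + s)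
        + (2 * p ^ 2 * φ ^ 2 - p ^ 2 * s - q * φ * (φ ^ 2 + s))
            * (s + n * (φ ^ 2 + s))
      = (n : ℝ) * ((q * φ - p ^ 2) / φ ^ 2) * s ^ 2 * (φ ^ 2 + s)
        + (n - 1) * (q * φ - p ^ 2) * s * (φ ^ 2 + s)
        - (n + 2) * p ^ 2 * s ^ 2
        - 3 / 4 * (n - 1) * φ ^ 2 * p ^ 2 * s ∧
    (n : ℝ) * ((q * φ - p ^ 2) / φ ^ 2) * (φ ^ 2 + s) ^ 3
        + n * p ^ 2 * (φ ^ 2 + s) ^ 2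
        + (n - 1) / 4 * φ ^ 2 * p ^ 2 * s
        - 2 * n * p ^ 2 * φ ^ 2 * (φ ^ 2 + s)
        + (2 * p ^ 2 * φ ^ 2 - p ^ 2 * s - q * φ * (φ ^ 2 + s))
            * (s + n * (φ ^ 2 + s)) ≤ 0 := by
  have one_le_n : (1 : ℝ) ≤ n := by exact_mod_cast one_le_two.trans hn
  exact gradient_estimate_algebraic_identity_general one_le_n hφ.ne' hs hpq
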